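/- arXiv:2502.02297 — 5 statements merged into one kernel-verified Lean document; each statement's English description precedes it below -/
import Mathlib

section
/- Let F_g(a1,a2) = (1/12^g) * \sum_{j=0}^{g} [ (2j-1)!! / ( (2g+1)!! * (2j)!! ) ] * (a1+a2)^{2j} * (a1^2 - a1*a2 + a2^2)^{g-j} for real numbers a1, a2 and integers g \ge 0. Then F_0(a1,a2) = 1, and for every integer g \ge 1 and all real a1, a2, the recursion (2g+1) * F_g(a1,a2) = (a1+a2)^{2g} / (24^g * g!) + ((a1^2 - a1*a2 + a2^2)/12) * F_{g-1}(a1,a2) holds. -/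
/-- The odd double factorial `(2n-1)!! = (2n)! / (2^n * n!)`, as a real number,
with the convention `(-1)!! = 1` (the case `n = 0`). -/
noncomputable def oddDF (n : ℕ) : ℝ :=
  (Nat.factorial (2 * n)) / (2 ^ n * Nat.factorial n)

/-- The closed-form expression
`F_g(a1,a2) = (1/12^g) * ∑_{j=0}^g ((2j-1)!! / ((2g+1)!! * (2j)!!)) *
  (a1+a2)^{2j} * (a1^2 - a1*a2 + a2^2)^{g-j}`,
where `(2j)!! = 2^j * j!`. -/
noncomputable def F (g : ℕ) (a1 a2 : ℝ) : ℝ :=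
  (1 / 12 ^ g) * ∑ j ∈ Finset.range (g + 1),
    (oddDF j / (oddDF (g + 1) * (2 ^ j * Nat.factorial j))) *
      (a1 + a2) ^ (2 * j) * (a1 ^ 2 - a1 * a2 + a2 ^ 2) ^ (g - j)

theorem oddDF_succ (n : ℕ) : oddDF (n + 1) = (2 * (n : ℝ) + 1) * oddDF n := by
  unfold oddDF
  have h : 2 * (n + 1) = (2 * n + 1) + 1 := by ring
  rw [h, Nat.factorial_succ, Nat.factorial_succ, Nat.factorial_succ]
  have h1 : (Nat.factorial n : ℝ) ≠ 0 := by positivity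
  have h2 : (n : ℝ) + 1 ≠ 0 := by positivity
  push_cast
  field_simp
  ring

theorem oddDF_ne_zero (n : ℕ) : oddDF n ≠ 0 := by
  unfold oddDF
  positivity

theorem F_initial_and_recursion :
    (∀ a1 a2 : ℝ, F 0 a1 a2 = 1) ∧
    (∀ g : ℕ, 1 ≤ g → ∀ a1 a2 : ℝ,
      (2 * (g : ℝ) + 1) * F g a1 a2 =
        (a1 + a2) ^ (2 * g) / (24 ^ g * Nat.factorial g) +
          ((a1 ^ 2 - a1 * a2 + a2 ^ 2) / 12) * F (g - 1) a1 a2) := by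
  refine ⟨fun a1 a2 => by simp [F, oddDF], ?_⟩
  intro g hg a1 a2
  obtain ⟨k, rfl⟩ : ∃ k, g = k + 1 := ⟨g - 1, by omega⟩
  rw [Nat.add_sub_cancel]
  unfold F
  rw [Finset.sum_range_succ, oddDF_succ (k + 1), mul_add, mul_add, add_comm]
  have hk : 2 * ((k + 1 : ℕ) : ℝ) + 1 ≠ 0 := by positivity
  have hd := oddDF_ne_zero (k + 1)
  congr 1
  · have h24 : (24 : ℝ) ^ (k + 1) = 12 ^ (k + 1) * 2 ^ (k + 1) := by
      rw [← mul_pow]; norm_num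
    have hf : (Nat.factorial (k + 1) : ℝ) ≠ 0 := by positivity
    rw [h24, Nat.sub_self, pow_zero]
    generalize 2 * ((k + 1 : ℕ) : ℝ) + 1 = c at *
    generalize (a1 + a2) ^ (2 * (k + 1)) = y at *
    field_simp
  · simp only [Finset.mul_sum]
    refine Finset.sum_congr rfl fun j hj => ?_
    have hj' : k + 1 - j = (k - j) + 1 := by
      have := Finset.mem_range.mp hj
      omega
    have hf : (Nat.factorial j : ℝ) ≠ 0 := by positivity
    rw [hj', pow_succ (12 : ℝ), pow_succ (a1 ^ 2 - a1 * a2 + a2 ^ 2)]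
    generalize 2 * ((k + 1 : ℕ) : ℝ) + 1 = c at *
    generalize (a1 + a2) ^ (2 * j) = y at *
    generalize a1 ^ 2 - a1 * a2 + a2 ^ 2 = q at *
    field_simp
end

section
/- Suppose (G_g)_{g \ge 0} is a family of functions G_g : \mathbb{R}^2 \to \mathbb{R} such that G_0(a1,a2) = 1 for all a1, a2, and for every g \ge 1 and all real a1, a2 one has (2g+1) * G_g(a1,a2) = (a1+a2)^{2g} / (24^g * g!) + ((a1^2 - a1*a2 + a2^2)/12) * G_{g-1}(a1,a2). Then for every g \ge 0 and all real a1, a2, G_g(a1,a2) = (1/12^g) * \sum_{j=0}^{g} [ (2j-1)!! / ( (2g+1)!! * (2j)!! ) ] * (a1+a2)^{2j} * (a1^2 - a1*a2 + a2^2)^{g-j}. -/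
theorem oddDF_pos (n : ℕ) : 0 < oddDF n := by
  unfold oddDF
  positivity

/-- Uniqueness: any family `G_g` satisfying `G_0 = 1` and the double ramification
recursion agrees with the closed form
`(1/12^g) * ∑_{j=0}^g ((2j-1)!! / ((2g+1)!! * (2j)!!)) *
  (a1+a2)^{2j} * (a1^2 - a1*a2 + a2^2)^{g-j}`, where `(2j)!! = 2^j * j!`. -/
theorem recursion_unique_solution (G : ℕ → ℝ → ℝ → ℝ)
    (h0 : ∀ a1 a2 : ℝ, G 0 a1 a2 = 1)
    (hrec : ∀ g : ℕ, 1 ≤ g → ∀ a1 a2 : ℝ,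
      (2 * (g : ℝ) + 1) * G g a1 a2 =
        (a1 + a2) ^ (2 * g) / (24 ^ g * Nat.factorial g) +
          ((a1 ^ 2 - a1 * a2 + a2 ^ 2) / 12) * G (g - 1) a1 a2) :
    ∀ g : ℕ, ∀ a1 a2 : ℝ,
      G g a1 a2 =
        (1 / 12 ^ g) * ∑ j ∈ Finset.range (g + 1),
          (oddDF j / (oddDF (g + 1) * (2 ^ j * Nat.factorial j))) *
            (a1 + a2) ^ (2 * j) * (a1 ^ 2 - a1 * a2 + a2 ^ 2) ^ (g - j) := by
  intro g
  induction g with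
  | zero =>
    intro a1 a2
    rw [h0]
    norm_num [oddDF]
  | succ g ih =>
    intro a1 a2
    have h := hrec (g + 1) (by omega) a1 a2
    rw [Nat.add_sub_cancel, ih a1 a2] at h
    have hc : (2 * ((g + 1 : ℕ) : ℝ) + 1) ≠ 0 := by positivity
    apply mul_left_cancel₀ hc
    rw [h, Finset.sum_range_succ _ (g + 1), oddDF_succ (g + 1)]
    have hp := (oddDF_pos (g + 1)).ne'
    have h24 : (24 : ℝ) ^ (g + 1) = 12 ^ (g + 1) * 2 ^ (g + 1) := by
      rw [← mul_pow]; norm_num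
    generalize (2 * ((g + 1 : ℕ) : ℝ) + 1) = c at hc
    generalize a1 ^ 2 - a1 * a2 + a2 ^ 2 = q
    generalize a1 + a2 = s
    have hs : ∑ j ∈ Finset.range (g + 1),
          (oddDF j / (c * oddDF (g + 1) * (2 ^ j * Nat.factorial j))) *
            s ^ (2 * j) * q ^ (g + 1 - j)
        = (q / c) * ∑ j ∈ Finset.range (g + 1),
          (oddDF j / (oddDF (g + 1) * (2 ^ j * Nat.factorial j))) *
            s ^ (2 * j) * q ^ (g - j) := by
      rw [Finset.mul_sum]
      apply Finset.sum_congr rfl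
      intro j hj
      have hj' : g + 1 - j = (g - j) + 1 := by
        have := Finset.mem_range.mp hj
        omega
      rw [hj', pow_succ]
      field_simp
    rw [hs, h24, Nat.sub_self, pow_zero]
    generalize ∑ j ∈ Finset.range (g + 1),
          (oddDF j / (oddDF (g + 1) * (2 ^ j * Nat.factorial j))) *
            s ^ (2 * j) * q ^ (g - j) = S
    have hf : ((g + 1).factorial : ℝ) ≠ 0 := by positivity
    generalize ((g + 1).factorial : ℝ) = f at hf
    rw [pow_succ (12 : ℝ) g]
    field_simp
    try ring
end

section
/- Let p, q be complex numbers with 0 < |q| < |p| < 1. Then the family a \mapsto a * p^a / (1 - q^a), indexed by nonzero integers a, is absolutely summable, and \sum_{a \in \mathbb{Z}, a \ne 0} a p^a / (1 - q^a) = p/(1-p)^2 + \sum_{n \ge 1} q^n \sum_{d | n} d * (p^d + p^{-d}), where the outer series on the right also converges absolutely. -/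
lemma lsq_summable (x q : ℂ) (hq : ‖q‖ < 1) (hx : ‖x * q‖ < 1) :
    Summable (fun c : ℕ × ℕ =>
      ((c.1 + 1 : ℕ) : ℂ) * x ^ (c.1 + 1) * q ^ ((c.1 + 1) * (c.2 + 1))) := by
  have h1 : Summable (fun n : ℕ => ((n + 1 : ℕ) : ℝ) * ‖x * q‖ ^ (n + 1)) := by
    have := summable_pow_mul_geometric_of_norm_lt_one (R := ℝ) 1
      (r := ‖x * q‖) (by simpa using hx)
    have := (summable_nat_add_iff 1).2 this
    simpa using this
  have h2 : Summable (fun n : ℕ => ‖q‖ ^ n) :=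
    summable_geometric_of_lt_one (norm_nonneg _) hq
  have h3 := h1.mul_of_nonneg h2 (fun n => by positivity) (fun n => by positivity)
  refine Summable.of_norm_bounded h3 ?_
  rintro ⟨d, m⟩
  simp only [norm_mul, norm_pow, Complex.norm_natCast]
  have e : (d + 1) * (m + 1) = (d + 1) + (m + d * m) := by ring
  rw [e, pow_add ‖q‖ (d + 1), mul_pow, pow_add ‖q‖ m]
  have : ‖q‖ ^ (d * m) ≤ 1 := pow_le_one₀ (norm_nonneg _) hq.le
  calc _ = (((d + 1 : ℕ) : ℝ) * (‖x‖ ^ (d + 1) * ‖q‖ ^ (d + 1)) * ‖q‖ ^ m) * ‖q‖ ^ (d * m) := by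
        ring
    _ ≤ _ := mul_le_of_le_one_right (by positivity) this

lemma lsq_key (x q : ℂ) (hq : ‖q‖ < 1) (hx : ‖x * q‖ < 1) :
    ∃ S : ℂ, HasSum (fun n : ℕ => q ^ (n + 1) * ∑ d ∈ (n + 1).divisors, (d : ℂ) * x ^ d) S ∧
      HasSum (fun d : ℕ => ((d + 1 : ℕ) : ℂ) * x ^ (d + 1) *
        (q ^ (d + 1) / (1 - q ^ (d + 1)))) S := by
  have hs := (lsq_summable x q hq hx).hasSum
  refine ⟨_, ?_, hs.prod_fiberwise ?_⟩
  · let g : ℕ+ × ℕ+ → ℂ := fun c =>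
      ((c.1 : ℕ) : ℂ) * x ^ (c.1 : ℕ) * q ^ ((c.1 : ℕ) * (c.2 : ℕ))
    have h1 := (Equiv.prodCongr Equiv.pnatEquivNat Equiv.pnatEquivNat).symm.hasSum_iff
      (f := g) |>.1 hs
    have h2 := (sigmaAntidiagonalEquivProd.hasSum_iff (f := g)).2 h1
    have h3 := h2.sigma (fun n => hasSum_fintype _)
    have h4 := (Equiv.pnatEquivNat.symm.hasSum_iff).2 h3
    convert h4 using 1
    funext n
    symm
    simp only [Function.comp, g, sigmaAntidiagonalEquivProd, divisorsAntidiagonalFactors,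
      Equiv.coe_fn_mk, PNat.mk_coe]
    rw [Finset.univ_eq_attach, Finset.sum_attach _ (fun y : ℕ × ℕ =>
      (y.1 : ℂ) * x ^ y.1 * q ^ (y.1 * y.2)),
      Nat.sum_divisorsAntidiagonal (fun a b : ℕ => (a : ℂ) * x ^ a * q ^ (a * b)),
      Finset.mul_sum]
    refine Finset.sum_congr rfl fun d hd => ?_
    have e : ((Equiv.pnatEquivNat.symm n : ℕ+) : ℕ) = n + 1 := rfl
    rw [e, Nat.mul_div_cancel' (Nat.dvd_of_mem_divisors hd)]
    ring
  · intro d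
    have hq' : ‖q ^ (d + 1)‖ < 1 := by
      rw [norm_pow]; exact pow_lt_one₀ (norm_nonneg _) hq (by simp)
    have := ((hasSum_geometric_of_norm_lt_one hq').mul_left (q ^ (d + 1))).mul_left
      (((d + 1 : ℕ) : ℂ) * x ^ (d + 1))
    rw [← div_eq_mul_inv] at this
    have e : (fun m : ℕ => ((d + 1 : ℕ) : ℂ) * x ^ (d + 1) * q ^ ((d + 1) * (m + 1))) =
        fun m : ℕ => ((d + 1 : ℕ) : ℂ) * x ^ (d + 1) * (q ^ (d + 1) * (q ^ (d + 1)) ^ m) := by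
      funext m
      rw [pow_mul, pow_succ (q ^ (d + 1)) m]
      ring
    exact e ▸ this


/-- For complex `p, q` with `0 < |q| < |p| < 1`, the family
`a ↦ a p^a/(1 - q^a)` over nonzero integers `a` is absolutely summable, and
`∑_{a ≠ 0} a p^a/(1 - q^a) = p/(1-p)^2 + ∑_{n ≥ 1} q^n ∑_{d ∣ n} d (p^d + p^{-d})`,
where the outer series on the right also converges absolutely. -/
theorem lattice_sum_q_expansion (p q : ℂ)
    (hq : 0 < ‖q‖) (hqp : ‖q‖ < ‖p‖) (hp : ‖p‖ < 1) :
    Summable (fun a : {a : ℤ // a ≠ 0} =>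
      ‖(a.1 : ℂ) * p ^ a.1 / (1 - q ^ a.1)‖) ∧
    Summable (fun n : ℕ =>
      ‖q ^ (n + 1) * ∑ d ∈ (n + 1).divisors,
        (d : ℂ) * (p ^ (d : ℤ) + p ^ (-(d : ℤ)))‖) ∧
    ∑' a : {a : ℤ // a ≠ 0}, (a.1 : ℂ) * p ^ a.1 / (1 - q ^ a.1) =
      p / (1 - p) ^ 2 +
        ∑' n : ℕ, q ^ (n + 1) * ∑ d ∈ (n + 1).divisors,
          (d : ℂ) * (p ^ (d : ℤ) + p ^ (-(d : ℤ))) := by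
  have hp0 : p ≠ 0 := norm_pos_iff.1 (hq.trans hqp)
  have hq0 : q ≠ 0 := norm_pos_iff.1 hq
  have hq1 : ‖q‖ < 1 := hqp.trans hp
  have hqn : ∀ d : ℕ, 1 - q ^ (d + 1) ≠ 0 := by
    intro d h
    have h1 : ‖q ^ (d + 1)‖ < 1 := by
      rw [norm_pow]; exact pow_lt_one₀ (norm_nonneg _) hq1 (by simp)
    rw [← sub_eq_zero.1 h] at h1
    simp at h1
  obtain ⟨S, hS1, hS2⟩ := lsq_key p q hq1 (by
    rw [norm_mul]; exact mul_lt_one_of_nonneg_of_lt_one_left (norm_nonneg _) hp hq1.le)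
  obtain ⟨T, hT1, hT2⟩ := lsq_key p⁻¹ q hq1 (by
    rw [norm_mul, norm_inv, inv_mul_lt_iff₀ (hq.trans hqp)]; simpa using hqp)
  have hR : HasSum (fun n : ℕ => q ^ (n + 1) * ∑ d ∈ (n + 1).divisors,
        (d : ℂ) * (p ^ (d : ℤ) + p ^ (-(d : ℤ)))) (S + T) := by
    convert hS1.add hT1 using 2 with n
    rw [← mul_add, ← Finset.sum_add_distrib]
    congr 1
    refine Finset.sum_congr rfl fun d _ => ?_
    simp [mul_add]
  have hG : HasSum (fun n : ℕ => ((n + 1 : ℕ) : ℂ) * p ^ (n + 1)) (p / (1 - p) ^ 2) := by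
    have := hasSum_coe_mul_geometric_of_norm_lt_one hp
    rw [← hasSum_nat_add_iff' 1] at this
    simpa using this
  have hL : HasSum (fun a : ℤ => (a : ℂ) * p ^ a / (1 - q ^ a))
      (p / (1 - p) ^ 2 + (S + T)) := by
    have h := HasSum.of_add_one_of_neg_add_one (f := fun a : ℤ => (a : ℂ) * p ^ a / (1 - q ^ a))
      (m := p / (1 - p) ^ 2 + S) (m' := T) ?_ ?_
    · simpa [add_assoc] using h
    · convert hG.add hS2 using 2 with d
      have e : ((d : ℤ) + 1) = ((d + 1 : ℕ) : ℤ) := by push_cast; rfl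
      rw [e, zpow_natCast, zpow_natCast]
      have := hqn d
      push_cast
      field_simp
      ring
    · convert hT2 using 2 with d
      have e : -((d : ℤ) + 1) = -((d + 1 : ℕ) : ℤ) := by push_cast; rfl
      rw [e, zpow_neg, zpow_neg, zpow_natCast, zpow_natCast, inv_pow]
      have h1 := hqn d
      have h2 : q ^ (d + 1) ≠ 0 := pow_ne_zero _ hq0
      have h3 : p ^ (d + 1) ≠ 0 := pow_ne_zero _ hp0
      have h4 : 1 - (q ^ (d + 1))⁻¹ = - ((1 - q ^ (d + 1)) / q ^ (d + 1)) := by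
        field_simp
        ring
      rw [h4]
      push_cast
      field_simp
  have hL' : HasSum (fun a : {a : ℤ // a ≠ 0} => (a.1 : ℂ) * p ^ a.1 / (1 - q ^ a.1))
      (p / (1 - p) ^ 2 + (S + T)) := by
    refine (hasSum_subtype_iff_of_support_subset (s := {a : ℤ | a ≠ 0}) ?_).2 hL
    intro a ha h0
    subst h0
    simp at ha
  exact ⟨hL'.summable.norm, hR.summable.norm, by rw [hL'.tsum_eq, hR.tsum_eq]⟩
end

section
/- Let g \ge 1 be an integer and let p, q be complex numbers with 0 < |q| < |p| < 1. Then the family a \mapsto a^{2g-1} p^a / (1 - q^a), indexed by nonzero integers a, is absolutely summable, and \sum_{a \in \mathbb{Z}, a \ne 0} a^{2g-1} p^a / (1 - q^a) = \sum_{a \ge 1} a^{2g-1} p^a + \sum_{n \ge 1} q^n \sum_{d | n} d^{2g-1} (p^d + p^{-d}), where both series on the right converge absolutely. -/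
lemma lattice_aux (k : ℕ) (x q : ℂ) (hq1 : ‖q‖ < 1) (hx : ‖q * x‖ < 1) :
    ∃ S : ℂ, HasSum (fun a : ℕ => ((a : ℂ) + 1) ^ k * x ^ (a + 1) * (q ^ (a + 1) / (1 - q ^ (a + 1)))) S ∧
      HasSum (fun n : ℕ => q ^ (n + 1) * ∑ d ∈ (n + 1).divisors, (d : ℂ) ^ k * x ^ d) S := by
  set F : ℕ+ × ℕ+ → ℂ := fun c => ((c.1 : ℕ) : ℂ) ^ k * x ^ (c.1 : ℕ) * q ^ ((c.1 : ℕ) * (c.2 : ℕ)) with hF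
  have h1 : Summable (fun d : ℕ+ => ‖((d : ℕ) : ℂ) ^ k * (q * x) ^ (d : ℕ)‖) :=
    (summable_norm_pow_mul_geometric_of_norm_lt_one k hx).comp_injective PNat.coe_injective
  have h2 : Summable (fun m : ℕ+ => ‖q‖ ^ ((m : ℕ) - 1)) := by
    have := (summable_geometric_of_lt_one (norm_nonneg q) hq1)
    exact this.comp_injective (i := fun m : ℕ+ => (m : ℕ) - 1) Equiv.pnatEquivNat.injective
  have hsum : Summable F := by
    apply Summable.of_norm_bounded (h1.mul_of_nonneg h2 (fun _ => norm_nonneg _)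
      (fun _ => by positivity))
    rintro ⟨d, m⟩
    have hm : (m : ℕ) = ((m : ℕ) - 1) + 1 := by have := m.pos; omega
    have : F (d, m) = ((d : ℕ) : ℂ) ^ k * (q * x) ^ (d : ℕ) * (q ^ ((m : ℕ) - 1)) ^ (d : ℕ) := by
      simp only [hF]
      rw [hm]
      simp only [Nat.add_sub_cancel]
      rw [← pow_mul]
      ring
    rw [this, norm_mul]
    refine mul_le_mul_of_nonneg_left ?_ (norm_nonneg _)
    rw [norm_pow, norm_pow]
    exact pow_le_of_le_one (by positivity) (pow_le_one₀ (norm_nonneg _) hq1.le) d.pos.ne'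
  obtain ⟨S, hS⟩ := hsum
  refine ⟨S, ?_, ?_⟩
  · have h3 : HasSum (fun d : ℕ+ => ((d : ℕ) : ℂ) ^ k * x ^ (d : ℕ) * (q ^ (d : ℕ) / (1 - q ^ (d : ℕ)))) S := by
      refine hS.prod_fiberwise fun d => ?_
      simp only [hF]
      apply HasSum.mul_left
      have hd : ‖q ^ (d : ℕ)‖ < 1 := by
        rw [norm_pow]; exact pow_lt_one₀ (norm_nonneg _) hq1 d.pos.ne'
      have := (hasSum_geometric_of_norm_lt_one hd).mul_left (q ^ (d : ℕ))
      rw [← Equiv.pnatEquivNat.symm.hasSum_iff, div_eq_mul_inv]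
      convert this using 2 with m
      simp [pow_mul, pow_succ']
    rw [← Equiv.pnatEquivNat.symm.hasSum_iff] at h3
    convert h3 using 2 with a
    simp
  · rw [← sigmaAntidiagonalEquivProd.hasSum_iff] at hS
    have h3 := hS.sigma (g := fun n : ℕ+ => q ^ (n : ℕ) * ∑ d ∈ (n : ℕ).divisors, (d : ℂ) ^ k * x ^ d)
      (fun n => by
        have := hasSum_fintype (fun y : Nat.divisorsAntidiagonal n =>
          (F ∘ sigmaAntidiagonalEquivProd) ⟨n, y⟩)
        convert this using 1
        rw [Finset.univ_eq_attach]
        have h4 := (n : ℕ).divisorsAntidiagonal.sum_attach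
          (fun y : ℕ × ℕ => (y.1 : ℂ) ^ k * x ^ y.1 * q ^ (y.1 * y.2))
        refine Eq.trans ?_ h4.symm
        rw [Nat.sum_divisorsAntidiagonal (fun a b => (a : ℂ) ^ k * x ^ a * q ^ (a * b)),
          Finset.mul_sum]
        refine Finset.sum_congr rfl fun i hi => ?_
        rw [Nat.mul_div_cancel' (Nat.dvd_of_mem_divisors hi)]
        ring)
    rw [← Equiv.pnatEquivNat.symm.hasSum_iff] at h3
    convert h3 using 2 with a
    simp

/-- For an integer `g ≥ 1` and complex `p, q` with `0 < |q| < |p| < 1`, the family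
`a ↦ a^{2g-1} p^a/(1 - q^a)` over nonzero integers `a` is absolutely summable, and
`∑_{a ≠ 0} a^{2g-1} p^a/(1 - q^a)
  = ∑_{a ≥ 1} a^{2g-1} p^a + ∑_{n ≥ 1} q^n ∑_{d ∣ n} d^{2g-1} (p^d + p^{-d})`,
where both series on the right converge absolutely. -/
theorem lattice_sum_q_expansion_higher (g : ℕ) (hg : 1 ≤ g) (p q : ℂ)
    (hq : 0 < ‖q‖) (hqp : ‖q‖ < ‖p‖) (hp : ‖p‖ < 1) :
    Summable (fun a : {a : ℤ // a ≠ 0} =>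
      ‖(a.1 : ℂ) ^ (2 * g - 1) * p ^ a.1 / (1 - q ^ a.1)‖) ∧
    Summable (fun a : ℕ =>
      ‖((a : ℂ) + 1) ^ (2 * g - 1) * p ^ (a + 1)‖) ∧
    Summable (fun n : ℕ =>
      ‖q ^ (n + 1) * ∑ d ∈ (n + 1).divisors,
        (d : ℂ) ^ (2 * g - 1) * (p ^ (d : ℤ) + p ^ (-(d : ℤ)))‖) ∧
    ∑' a : {a : ℤ // a ≠ 0}, (a.1 : ℂ) ^ (2 * g - 1) * p ^ a.1 / (1 - q ^ a.1) =
      (∑' a : ℕ, ((a : ℂ) + 1) ^ (2 * g - 1) * p ^ (a + 1)) +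
        ∑' n : ℕ, q ^ (n + 1) * ∑ d ∈ (n + 1).divisors,
          (d : ℂ) ^ (2 * g - 1) * (p ^ (d : ℤ) + p ^ (-(d : ℤ))) := by
  obtain ⟨k, hk⟩ : ∃ k, k = 2 * g - 1 := ⟨_, rfl⟩
  have hodd : Odd k := ⟨g - 1, by omega⟩
  rw [← hk]
  have hk0 : k ≠ 0 := by omega
  have hq1 : ‖q‖ < 1 := hqp.trans hp
  have hp0 : 0 < ‖p‖ := hq.trans hqp
  have hq0 : q ≠ 0 := norm_pos_iff.1 hq
  have hpne : p ≠ 0 := norm_pos_iff.1 hp0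
  obtain ⟨S, hS1, hS2⟩ := lattice_aux k p q hq1 (by
    rw [norm_mul]; exact mul_lt_one_of_nonneg_of_lt_one_left (norm_nonneg _) hq1 hp.le)
  obtain ⟨T, hT1, hT2⟩ := lattice_aux k p⁻¹ q hq1 (by
    rw [norm_mul, norm_inv, ← div_eq_mul_inv]; exact (div_lt_one hp0).2 hqp)
  have hA : Summable (fun a : ℕ => ((a : ℂ) + 1) ^ k * p ^ (a + 1)) := by
    have := (summable_norm_pow_mul_geometric_of_norm_lt_one k hp).of_norm
    simpa using (summable_nat_add_iff 1).2 this
  have hne (a : ℕ) : 1 - q ^ (a + 1) ≠ 0 := by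
    intro h
    have h' : q ^ (a + 1) = 1 := (sub_eq_zero.1 h).symm
    have : ‖q ^ (a + 1)‖ < 1 := by
      rw [norm_pow]; exact pow_lt_one₀ (norm_nonneg _) hq1 (by omega)
    rw [h'] at this
    simp at this
  have hB := hS2.add hT2
  have hB' : HasSum (fun n : ℕ => q ^ (n + 1) * ∑ d ∈ (n + 1).divisors,
        (d : ℂ) ^ k * (p ^ (d : ℤ) + p ^ (-(d : ℤ)))) (S + T) := by
    convert hB using 2 with n
    rw [← mul_add, ← Finset.sum_add_distrib]
    congr 1
    refine Finset.sum_congr rfl fun d _ => ?_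
    rw [zpow_neg, zpow_natCast, inv_pow]
    ring
  set f : ℤ → ℂ := fun a => (a : ℂ) ^ k * p ^ a / (1 - q ^ a) with hf
  have hf0 : f 0 = 0 := by simp [hf]
  have hpos : HasSum (fun n : ℕ => f (n + 1)) ((∑' a : ℕ, ((a : ℂ) + 1) ^ k * p ^ (a + 1)) + S) := by
    convert hA.hasSum.add hS1 using 2 with n
    have := hne n
    have e1 (z : ℂ) : z ^ ((n : ℤ) + 1) = z ^ (n + 1) := by exact_mod_cast zpow_natCast z (n + 1)
    simp only [hf, e1]
    push_cast
    field_simp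
    ring
  have hneg : HasSum (fun n : ℕ => f (-((n : ℤ) + 1))) T := by
    convert hT1 using 2 with n
    have := hne n
    have e1 (z : ℂ) : z ^ ((n : ℤ) + 1) = z ^ (n + 1) := by exact_mod_cast zpow_natCast z (n + 1)
    simp only [hf, zpow_neg, e1]
    have h5 : (1 - (q ^ (n + 1))⁻¹) = -((1 - q ^ (n + 1)) / q ^ (n + 1)) := by
      field_simp
      ring
    rw [h5]
    push_cast
    rw [hodd.neg_pow, inv_pow]
    field_simp
  have hZ : HasSum f ((∑' a : ℕ, ((a : ℂ) + 1) ^ k * p ^ (a + 1)) + S + T) := by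
    refine HasSum.of_nat_of_neg_add_one (f := f) ?_ hneg
    have := (hasSum_nat_add_iff (f := fun n : ℕ => f n) 1).1 (by simpa using hpos)
    simpa [hf0] using this
  have hZ' : HasSum (fun a : {a : ℤ // a ≠ 0} => f a.1)
      ((∑' a : ℕ, ((a : ℂ) + 1) ^ k * p ^ (a + 1)) + S + T) := by
    refine (hasSum_subtype_iff_of_support_subset (s := {a : ℤ | a ≠ 0}) ?_).2 hZ
    intro a ha h0
    exact ha (by rw [h0, hf0])
  refine ⟨hZ'.summable.norm, hA.norm, hB'.summable.norm, ?_⟩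
  rw [hB'.tsum_eq, ← add_assoc]
  exact hZ'.tsum_eq
end

section
/- Let g \ge 1 be an integer and let q be a complex number with 0 < |q| < 1. Then the limit, as real p tends to 1 from below with |q| < p < 1, of ( \sum_{a \in \mathbb{Z}, a \ne 0} a^{2g-1} p^a / (1 - q^a) - \sum_{a \ge 1} a^{2g-1} p^a ) exists and equals 2 \sum_{n \ge 1} \sigma_{2g-1}(n) q^n, where \sigma_{2g-1}(n) = \sum_{d | n} d^{2g-1}. -/
lemma aux_den (q : ℂ) (hq1 : ‖q‖ < 1) (n : ℕ) : 1 - ‖q‖ ≤ ‖1 - q ^ (n + 1)‖ := by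
  have h1 : ‖q‖ ^ (n + 1) ≤ ‖q‖ := pow_le_of_le_one (norm_nonneg _) hq1.le (by omega)
  have h2 := norm_sub_norm_le (1 : ℂ) (q ^ (n + 1))
  rw [norm_one, norm_pow] at h2
  linarith

lemma aux_summable_geom (k : ℕ) (r : ℝ) (hr0 : 0 ≤ r) (hr1 : r < 1) :
    Summable (fun n : ℕ => ((n : ℝ) + 1) ^ k * r ^ (n + 1)) := by
  have := (summable_nat_add_iff 1).2 (summable_pow_mul_geometric_of_norm_lt_one (R := ℝ) k
    (r := r) (by rwa [Real.norm_of_nonneg hr0]))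
  simpa using this

lemma aux_bound (k : ℕ) (q x : ℂ) (hq1 : ‖q‖ < 1) (r : ℝ) (hx : ‖x‖ ≤ r) (n : ℕ) :
    ‖((n : ℂ) + 1) ^ k * x ^ (n + 1) / (1 - q ^ (n + 1))‖
      ≤ ((n : ℝ) + 1) ^ k * r ^ (n + 1) / (1 - ‖q‖) := by
  have hn : ‖(n : ℂ) + 1‖ = (n : ℝ) + 1 := by
    have := Complex.norm_natCast (n + 1)
    push_cast at this
    exact this
  have hr0 : 0 ≤ r := (norm_nonneg _).trans hx
  rw [norm_div, norm_mul, norm_pow, norm_pow, hn]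
  have := aux_den q hq1 n
  have h3 : 0 < 1 - ‖q‖ := by linarith
  gcongr

lemma aux_summable (k : ℕ) (q x : ℂ) (hq1 : ‖q‖ < 1) (hx : ‖x‖ < 1) :
    Summable (fun n : ℕ => ((n : ℂ) + 1) ^ k * x ^ (n + 1) / (1 - q ^ (n + 1))) :=
  Summable.of_norm_bounded ((aux_summable_geom k ‖x‖ (norm_nonneg _) hx).div_const (1 - ‖q‖))
    (aux_bound k q x hq1 ‖x‖ le_rfl)

lemma aux_tendsto (k : ℕ) (q : ℂ) (hq1 : ‖q‖ < 1) (r : ℝ) (hr0 : 0 ≤ r) (hr1 : r < 1)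
    (l : Filter ℝ) (c : ℝ → ℂ) (hc : Filter.Tendsto c l (nhds 1))
    (hb : ∀ᶠ p in l, ‖c p * q‖ ≤ r) :
    Filter.Tendsto (fun p => ∑' n : ℕ, ((n : ℂ) + 1) ^ k * (c p * q) ^ (n + 1) / (1 - q ^ (n + 1)))
      l (nhds (∑' n : ℕ, ((n : ℂ) + 1) ^ k * q ^ (n + 1) / (1 - q ^ (n + 1)))) := by
  refine tendsto_tsum_of_dominated_convergence
    ((aux_summable_geom k r hr0 hr1).div_const (1 - ‖q‖)) ?_ ?_
  · intro n
    have h : Filter.Tendsto (fun p => c p * q) l (nhds q) := by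
      simpa using hc.mul_const q
    exact ((h.pow (n + 1)).const_mul _).div_const _
  · filter_upwards [hb] with p hp n
    exact aux_bound k q _ hq1 r hp n

lemma aux_sigma (k : ℕ) (q : ℂ) (hq1 : ‖q‖ < 1) :
    ∑' n : ℕ, ((n : ℂ) + 1) ^ k * q ^ (n + 1) / (1 - q ^ (n + 1)) =
      ∑' n : ℕ, (∑ d ∈ (n + 1).divisors, (d : ℂ) ^ k) * q ^ (n + 1) := by
  have h := tsum_pow_div_one_sub_eq_tsum_sigma hq1 k
  rw [tsum_pnat_eq_tsum_succ (f := fun n : ℕ => (n : ℂ) ^ k * q ^ n / (1 - q ^ n)),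
    tsum_pnat_eq_tsum_succ (f := fun n : ℕ => (ArithmeticFunction.sigma k n : ℂ) * q ^ n)] at h
  simpa [ArithmeticFunction.sigma_apply] using h

lemma aux_split (k : ℕ) (hk : Odd k) (q : ℂ) (hq0 : 0 < ‖q‖) (hq1 : ‖q‖ < 1) (p : ℝ)
    (hp : ‖q‖ < p) (hp1 : p < 1) :
    (∑' a : {a : ℤ // a ≠ 0}, (a.1 : ℂ) ^ k * (p : ℂ) ^ a.1 / (1 - q ^ a.1)) -
          ∑' a : ℕ, ((a : ℂ) + 1) ^ k * (p : ℂ) ^ (a + 1) =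
    (∑' n : ℕ, ((n : ℂ) + 1) ^ k * ((p : ℂ) * q) ^ (n + 1) / (1 - q ^ (n + 1))) +
    ∑' n : ℕ, ((n : ℂ) + 1) ^ k * ((p : ℂ)⁻¹ * q) ^ (n + 1) / (1 - q ^ (n + 1)) := by
  have hp0 : 0 < p := hq0.trans hp
  have hpc : (p : ℂ) ≠ 0 := by exact_mod_cast hp0.ne'
  have hqc : q ≠ 0 := norm_pos_iff.1 hq0
  have hnp : ‖(p : ℂ)‖ = p := by simp [abs_of_pos hp0]
  have hd : ∀ n : ℕ, 1 - q ^ (n + 1) ≠ 0 := fun n h => by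
    have := aux_den q hq1 n
    rw [h, norm_zero] at this
    linarith
  set f : ℤ → ℂ := fun a => (a : ℂ) ^ k * (p : ℂ) ^ a / (1 - q ^ a) with hf
  have hf0 : f 0 = 0 := by simp [hf]
  have e1 : (∑' a : {a : ℤ // a ≠ 0}, (a.1 : ℂ) ^ k * (p : ℂ) ^ a.1 / (1 - q ^ a.1)) =
      ∑' a : ℤ, f a := by
    refine tsum_subtype_eq_of_support_subset (f := f) (s := {a : ℤ | a ≠ 0}) ?_
    intro a ha h
    exact ha (by rw [h, hf0])
  have s1 : Summable (fun n : ℕ => ((n : ℂ) + 1) ^ k * (p : ℂ) ^ (n + 1)) := by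
    have := aux_summable k 0 p (by simp) (by rwa [hnp])
    simpa using this
  have s2 : Summable (fun n : ℕ =>
      ((n : ℂ) + 1) ^ k * ((p : ℂ) * q) ^ (n + 1) / (1 - q ^ (n + 1))) := by
    refine aux_summable k q _ hq1 ?_
    rw [norm_mul, hnp]
    nlinarith
  have s3 : Summable (fun n : ℕ =>
      ((n : ℂ) + 1) ^ k * ((p : ℂ)⁻¹ * q) ^ (n + 1) / (1 - q ^ (n + 1))) := by
    refine aux_summable k q _ hq1 ?_
    rw [norm_mul, norm_inv, hnp, inv_mul_lt_iff₀ hp0]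
    linarith
  have h1 : HasSum (fun n : ℕ => f (n + 1))
      ((∑' n : ℕ, ((n : ℂ) + 1) ^ k * (p : ℂ) ^ (n + 1)) +
        ∑' n : ℕ, ((n : ℂ) + 1) ^ k * ((p : ℂ) * q) ^ (n + 1) / (1 - q ^ (n + 1))) := by
    convert s1.hasSum.add s2.hasSum using 2 with n
    have hz : ((n : ℤ) + 1) = ((n + 1 : ℕ) : ℤ) := by push_cast; ring
    have hdn := hd n
    simp only [hf]
    rw [hz, zpow_natCast, zpow_natCast, mul_pow]
    push_cast
    field_simp
    ring
  have h2 : HasSum (fun n : ℕ => f (-(n + 1)))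
      (∑' n : ℕ, ((n : ℂ) + 1) ^ k * ((p : ℂ)⁻¹ * q) ^ (n + 1) / (1 - q ^ (n + 1))) := by
    convert s3.hasSum using 2 with n
    have hz : (-((n : ℤ) + 1)) = -((n + 1 : ℕ) : ℤ) := by push_cast; ring
    have hqn : q ^ (n + 1) ≠ 0 := pow_ne_zero _ hqc
    have hpn : (p : ℂ) ^ (n + 1) ≠ 0 := pow_ne_zero _ hpc
    have hdn := hd n
    simp only [hf]
    rw [hz, zpow_neg, zpow_neg, zpow_natCast, zpow_natCast, Int.cast_neg, hk.neg_pow]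
    push_cast
    rw [mul_pow, inv_pow]
    have h4 : 1 - (q ^ (n + 1))⁻¹ = -(1 - q ^ (n + 1)) / q ^ (n + 1) := by
      field_simp; ring
    rw [h4]
    field_simp
  have := h1.of_add_one_of_neg_add_one h2
  rw [e1, this.tsum_eq, hf0]
  ring

theorem regularized_limit_eisenstein (g : ℕ) (hg : 1 ≤ g) (q : ℂ)
    (hq0 : 0 < ‖q‖) (hq1 : ‖q‖ < 1) :
    Filter.Tendsto
      (fun p : ℝ =>
        (∑' a : {a : ℤ // a ≠ 0},
            (a.1 : ℂ) ^ (2 * g - 1) * (p : ℂ) ^ a.1 / (1 - q ^ a.1)) -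
          ∑' a : ℕ, ((a : ℂ) + 1) ^ (2 * g - 1) * (p : ℂ) ^ (a + 1))
      (nhdsWithin 1 (Set.Ioo ‖q‖ 1))
      (nhds (2 * ∑' n : ℕ,
        (∑ d ∈ (n + 1).divisors, (d : ℂ) ^ (2 * g - 1)) * q ^ (n + 1))) := by
  have hk : Odd (2 * g - 1) := ⟨g - 1, by omega⟩
  generalize 2 * g - 1 = k at hk
  rw [← aux_sigma k q hq1, two_mul]
  set l := nhdsWithin (1 : ℝ) (Set.Ioo ‖q‖ 1) with hl
  have hmem : ∀ᶠ p in l, p ∈ Set.Ioo ‖q‖ 1 := self_mem_nhdsWithin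
  have hc : Filter.Tendsto (fun p : ℝ => (p : ℂ)) l (nhds 1) := by
    have : Filter.Tendsto (fun p : ℝ => (p : ℂ)) (nhds 1) (nhds ((1 : ℝ) : ℂ)) :=
      Complex.continuous_ofReal.tendsto 1
    rw [Complex.ofReal_one] at this
    exact this.mono_left nhdsWithin_le_nhds
  have hci : Filter.Tendsto (fun p : ℝ => (p : ℂ)⁻¹) l (nhds 1) := by
    simpa using hc.inv₀ one_ne_zero
  have hr1 : (1 + ‖q‖) / 2 < 1 := by linarith
  have hev : ∀ c : ℝ → ℂ, Filter.Tendsto c l (nhds 1) →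
      ∀ᶠ p in l, ‖c p * q‖ ≤ (1 + ‖q‖) / 2 := by
    intro c h
    have h' : Filter.Tendsto (fun p => ‖c p * q‖) l (nhds ‖q‖) := by
      simpa using (h.mul_const q).norm
    exact h'.eventually_le_const (by linarith)
  refine ((aux_tendsto k q hq1 _ (by positivity) hr1 l _ hc (hev _ hc)).add
    (aux_tendsto k q hq1 _ (by positivity) hr1 l _ hci (hev _ hci))).congr' ?_
  filter_upwards [hmem] with p hp
  exact (aux_split k hk q hq0 hq1 p hp.1 hp.2).symm
end
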